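/- The outer automorphism group of SL(2,ℝ) is ℤ/2, generated by the class of conjugation by the matrix ((0,1),(1,0)); i.e., Aut(SL(2,ℝ))/Inn(SL(2,ℝ)) ≅ ℤ/2 and conjugation by ((0,1),(1,0)) is an automorphism of SL(2,ℝ) that is not inner. -/

import Mathlib

open Matrix

abbrev SL2R := Matrix.SpecialLinearGroup (Fin 2) ℝ

/-!
Traces recognise elements of order three: `A ≠ 1` in `SL₂` satisfies `A ^ 3 = 1` exactly when
`tr A = -1`, so automorphisms preserve the traces `-1` and `1`. A unipotent is conjugate to its
square (as `2` is a square), which forces automorphisms to map it to an element of trace `2`.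
Hence `ψ (1 1; 0 1)` is conjugate to `(1 t; 0 1)` with `t ≠ 0`, and the class of `t` modulo squares
is the only obstruction to normalising `ψ` by an inner automorphism so that it fixes `(1 1; 0 1)`;
conjugation by `(0 1; 1 0)` changes the sign of `t`. A normalised `ψ` acts on `{(1 t; 0 1)}` through
an additive map which fixes `1` and preserves squares, that is, positivity, so it is the
identity. A conjugation by some `(1 a; 0 1)` then makes `ψ` trivial on `{(1 0; t 1)}` as well.
-/

open scoped MatrixGroups
open Matrix.SpecialLinearGroup

namespace SL2

section CommRing

variable {R : Type*} [CommRing R]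

/-- The upper unitriangular matrix `(1 t; 0 1)`, a root element of `SL₂`. -/
abbrev upper (t : R) : SL(2, R) := transvection zero_ne_one t

/-- The lower unitriangular matrix `(1 0; t 1)`, a root element of `SL₂`. -/
abbrev lower (t : R) : SL(2, R) := transvection one_ne_zero t

theorem coe_upper (t : R) : (upper t).1 = !![1, t; 0, 1] := by
  ext i j; fin_cases i <;> fin_cases j <;> simp [transvection_coe]

theorem coe_lower (t : R) : (lower t).1 = !![1, 0; t, 1] := by
  ext i j; fin_cases i <;> fin_cases j <;> simp [transvection_coe]

theorem upper_injective : Function.Injective (upper : R → SL(2, R)) := fun s t h => by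
  simpa [coe_upper] using congr($(h).1 0 1)

theorem upper_zero : upper (0 : R) = 1 := transvection_coeff_zero _

theorem upper_add (s t : R) : upper (s + t) = upper s * upper t := transvection_add _ s t

theorem commute_upper (s t : R) : Commute (upper s) (upper t) := by
  rw [Commute, SemiconjBy, ← upper_add, ← upper_add, add_comm]

theorem upper_inv (t : R) : (upper t)⁻¹ = upper (-t) := transvection_inv _ t

theorem lower_inv (t : R) : (lower t)⁻¹ = lower (-t) := transvection_inv _ t

theorem apply_mul_apply_sub_eq_one (A : SL(2, R)) : A 0 0 * A 1 1 - A 0 1 * A 1 0 = 1 := by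
  rw [← det_fin_two, det_coe]

theorem trace_upper_mul (t : R) (A : SL(2, R)) :
    (upper t * A).1.trace = A.1.trace + t * A 1 0 := by
  rw [coe_mul, coe_upper, trace_fin_two, trace_fin_two]
  simp [vecMul, dotProduct, Fin.sum_univ_two, add_right_comm]

theorem isConj_lower_upper_neg (t : R) : IsConj (lower t) (upper (-t)) := by
  refine isConj_iff.2 ⟨upper 1 * lower (-1) * upper 1, mul_inv_eq_iff_eq_mul.2 (Subtype.ext ?_)⟩
  simp only [coe_mul, coe_upper, coe_lower]
  simp

theorem isSquare_of_isConj_upper_one {t : R} (h : IsConj (upper 1) (upper t)) : IsSquare t := by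
  obtain ⟨g, hg⟩ := isConj_iff.1 h
  have hmul : g.1 * !![1, 1; 0, 1] = !![1, t; 0, 1] * g.1 := by
    rw [← coe_upper, ← coe_upper, ← coe_mul, ← coe_mul, mul_inv_eq_iff_eq_mul.1 hg]
  have h01 : g 0 0 = t * g 1 1 := by
    simpa [mul_apply, Fin.sum_univ_two, add_comm (g 0 1)] using congr($hmul 0 1)
  have h11 : g 1 0 = 0 := by simpa [mul_apply, Fin.sum_univ_two] using congr($hmul 1 1)
  have hdet := apply_mul_apply_sub_eq_one g
  exact ⟨g 0 0, by linear_combination (-t) * hdet - g 0 0 * h01 - t * g 0 1 * h11⟩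

theorem trace_eq_of_isConj {A B : SL(2, R)} (h : IsConj A B) : A.1.trace = B.1.trace := by
  obtain ⟨g, rfl⟩ := isConj_iff.1 h
  rw [coe_mul, coe_mul, trace_mul_comm, ← mul_assoc, ← coe_mul, inv_mul_cancel, coe_one, one_mul]

/-- Cayley–Hamilton in `SL₂`. -/
theorem coe_sq (A : SL(2, R)) : A.1 ^ 2 = A.1.trace • A.1 - 1 := by
  nontriviality R
  have h := aeval_self_charpoly A.1
  simp only [charpoly_fin_two, det_coe, map_add, map_sub, map_mul, map_pow, Polynomial.aeval_X,
    Polynomial.aeval_C, map_one, ← Algebra.smul_def] at h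
  exact eq_sub_of_add_eq (sub_eq_zero.1 (by rw [← h]; abel))

theorem trace_sq (A : SL(2, R)) : (A ^ 2).1.trace = A.1.trace ^ 2 - 2 := by
  rw [coe_pow, coe_sq, trace_sub, trace_smul, trace_one, smul_eq_mul, Fintype.card_fin, sq,
    Nat.cast_two]

theorem coe_pow_three_sub_one (A : SL(2, R)) :
    A.1 ^ 3 - 1 = (A.1.trace + 1) • ((A.1.trace - 1) • A.1 - 1) := by
  rw [pow_succ, coe_sq, sub_mul, smul_mul_assoc, one_mul, ← sq, coe_sq]
  module

theorem pow_three_eq_one_of_trace_eq_neg_one {A : SL(2, R)} (h : A.1.trace = -1) : A ^ 3 = 1 :=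
  Subtype.ext <| sub_eq_zero.1 <| by simp [coe_pow_three_sub_one, h]

theorem trace_eq_neg_one_of_pow_three_eq_one [IsDomain R] {A : SL(2, R)} (hA : A ^ 3 = 1)
    (hA1 : A ≠ 1) : A.1.trace = -1 := by
  by_contra hne
  have hτ : A.1.trace + 1 ≠ 0 := fun h => hne (eq_neg_of_add_eq_zero_left h)
  have hscalar : (A.1.trace - 1) • A.1 = 1 := by
    have h := coe_pow_three_sub_one A
    rw [← coe_pow, hA, coe_one, sub_self, eq_comm, smul_eq_zero_iff_right hτ] at h
    exact sub_eq_zero.1 h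
  have htrace : A.1.trace = 2 := by
    have h : (A.1.trace - 1) * A.1.trace = 2 := by simpa using congr(trace $hscalar)
    exact mul_left_cancel₀ hτ (by linear_combination h)
  exact hA1 (Subtype.ext (by simpa [htrace, show (2 : R) - 1 = 1 by norm_num] using hscalar))

end CommRing

section Field

variable {K : Type*} [Field K]

theorem isConj_upper_sq_mul {a : K} (ha : a ≠ 0) (t : K) :
    IsConj (upper t) (upper (a ^ 2 * t)) := by
  refine isConj_iff.2 ⟨diag2 a ha, mul_inv_eq_iff_eq_mul.2 (Subtype.ext ?_)⟩
  simp only [coe_mul, coe_upper, diag2_coe']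
  simp [mul_comm, sq, ha, mul_assoc]

theorem exists_eq_upper_mul_lower_mul_upper_inv {X : SL(2, K)} (hX : X.1.trace = 2)
    (hc : X 1 0 ≠ 0) : ∃ a : K, X = upper a * lower (X 1 0) * (upper a)⁻¹ := by
  have hdet := apply_mul_apply_sub_eq_one X
  rw [trace_fin_two] at hX
  obtain ⟨a, ha⟩ : ∃ a, a * X 1 0 = X 0 0 - 1 := ⟨_, div_mul_cancel₀ _ hc⟩
  have h00 : X 0 0 = 1 + a * X 1 0 := by linear_combination -ha
  have h01 : X 0 0 * a + X 0 1 = a :=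
    mul_right_cancel₀ hc (by linear_combination (X 0 0 - 1) * ha + X 0 0 * hX - hdet)
  have h11 : X 1 0 * a + X 1 1 = 1 := by linear_combination ha + hX
  have hmul : X.1 * !![1, a; 0, 1] = !![1, a; 0, 1] * !![1, 0; X 1 0, 1] := by
    rw [eta_fin_two (X.1 * _)]
    simp [mul_apply, Fin.sum_univ_two, h01, h11, ← h00]
  refine ⟨a, eq_mul_inv_of_mul_eq (Subtype.ext ?_)⟩
  rw [coe_mul, coe_mul, coe_upper, coe_lower, hmul]

theorem exists_isConj_upper_of_trace_eq_two {X : SL(2, K)} (hX : X.1.trace = 2) :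
    ∃ t : K, IsConj X (upper t) := by
  by_cases hc : X 1 0 = 0
  · have hdet := apply_mul_apply_sub_eq_one X
    rw [trace_fin_two] at hX
    have h00 : X 0 0 = 1 := by
      have hsq : (X 0 0 - 1) ^ 2 = 0 := by linear_combination X 0 0 * hX - hdet - X 0 1 * hc
      exact sub_eq_zero.1 (pow_eq_zero_iff two_ne_zero |>.1 hsq)
    have h11 : X 1 1 = 1 := by linear_combination hX - h00
    have hXupper : X = upper (X 0 1) := Subtype.ext <| by
      rw [coe_upper, eta_fin_two X.1, h00, hc, h11]; simp
    exact ⟨X 0 1, hXupper ▸ .refl _⟩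
  · obtain ⟨a, ha⟩ := exists_eq_upper_mul_lower_mul_upper_inv hX hc
    exact ⟨-X 1 0, (isConj_iff.2 ⟨upper a, ha.symm⟩).symm.trans (isConj_lower_upper_neg _)⟩

end Field

section Automorphism

section IsDomain

variable {R : Type*} [CommRing R] [IsDomain R] (ψ : MulAut SL(2, R))

theorem trace_map_eq_neg_one {A : SL(2, R)} (hA : A.1.trace = -1) : (ψ A).1.trace = -1 := by
  by_cases h : ψ A = 1
  · rwa [h, ← (map_eq_one_iff ψ ψ.injective).1 h]
  · refine trace_eq_neg_one_of_pow_three_eq_one ?_ h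
    rw [← map_pow, pow_three_eq_one_of_trace_eq_neg_one hA, map_one]

theorem trace_map_eq_one {A : SL(2, R)} (hA : A.1.trace = 1) : (ψ A).1.trace = 1 := by
  have hsq : (ψ (A ^ 2)).1.trace = -1 := trace_map_eq_neg_one ψ (by rw [trace_sq, hA]; norm_num)
  rw [map_pow, trace_sq] at hsq
  obtain h | h := sq_eq_one_iff.1 (show (ψ A).1.trace ^ 2 = 1 by linear_combination hsq)
  · exact h
  · have hA' := trace_map_eq_neg_one ψ⁻¹ h
    rw [MulAut.inv_apply_self] at hA'
    rw [h, ← hA', hA]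

theorem trace_map_eq_two_of_isConj_sq [NeZero (3 : R)] {A : SL(2, R)} (hA : A.1.trace = 2)
    (hconj : IsConj A (A ^ 2)) : (ψ A).1.trace = 2 := by
  have h := trace_eq_of_isConj (ψ.toMonoidHom.map_isConj hconj)
  simp only [MulEquiv.toMonoidHom_eq_coe, MonoidHom.coe_coe, map_pow, trace_sq] at h
  have hroots : ((ψ A).1.trace - 2) * ((ψ A).1.trace + 1) = 0 := by linear_combination -h
  refine sub_eq_zero.1 ((mul_eq_zero.1 hroots).resolve_right fun hneg => ?_)
  have hA' := trace_map_eq_neg_one ψ⁻¹ (eq_neg_of_add_eq_zero_left hneg)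
  rw [MulAut.inv_apply_self, hA] at hA'
  exact NeZero.ne (3 : R) (by linear_combination hA')

theorem eq_upper_of_commute_upper_one [NeZero (2 : R)] {A : SL(2, R)} (hA : A.1.trace = 2)
    (hcomm : Commute A (upper 1)) : A = upper (A 0 1) := by
  have hmul : A.1 * !![1, 1; 0, 1] = !![1, 1; 0, 1] * A.1 := by
    rw [← coe_upper, ← coe_mul, ← coe_mul, hcomm.eq]
  have h10 : A 1 0 = 0 := by simpa [mul_apply, Fin.sum_univ_two] using congr($hmul 1 1)
  have h01 : A 0 0 = A 1 1 := by
    simpa [mul_apply, Fin.sum_univ_two, add_comm (A 0 1)] using congr($hmul 0 1)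
  rw [trace_fin_two, h01, ← two_mul] at hA
  have h11 : A 1 1 = 1 := mul_left_cancel₀ (NeZero.ne (2 : R)) (by rw [hA, mul_one])
  apply Subtype.ext
  rw [coe_upper, eta_fin_two A.1, h01, h10, h11]
  simp

end IsDomain

section Swap

variable {R : Type*} [CommRing R]

theorem swap_mul_swap : (!![0, 1; 1, 0] * !![0, 1; 1, 0] : Matrix (Fin 2) (Fin 2) R) = 1 := by
  simp [one_fin_two]

/-- Conjugation by `(0 1; 1 0)` as an endomorphism of `SL₂`, which it preserves although this
matrix has determinant `-1`; `swapConj` is the resulting automorphism. -/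
def swapConjHom : SL(2, R) →* SL(2, R) :=
  .mk' (fun A => ⟨!![0, 1; 1, 0] * A.1 * !![0, 1; 1, 0], by
    rw [det_mul, det_mul, det_coe, det_fin_two_of]; ring⟩) fun A B => Subtype.ext <| calc
      !![0, 1; 1, 0] * (A.1 * B.1) * !![0, 1; 1, 0]
      _ = !![0, 1; 1, 0] * A.1 * (!![0, 1; 1, 0] * !![0, 1; 1, 0]) * B.1 * !![0, 1; 1, 0] := by
        rw [swap_mul_swap, mul_one, mul_assoc _ A.1]
      _ = !![0, 1; 1, 0] * A.1 * !![0, 1; 1, 0] * (!![0, 1; 1, 0] * B.1 * !![0, 1; 1, 0]) := by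
        simp only [mul_assoc]

theorem swapConjHom_comp_self : (swapConjHom (R := R)).comp swapConjHom = .id _ :=
  MonoidHom.ext fun A => Subtype.ext <| calc
    !![0, 1; 1, 0] * (!![0, 1; 1, 0] * A.1 * !![0, 1; 1, 0]) * !![0, 1; 1, 0]
    _ = !![0, 1; 1, 0] * !![0, 1; 1, 0] * A.1 * (!![0, 1; 1, 0] * !![0, 1; 1, 0]) := by
      simp only [mul_assoc]
    _ = A.1 := by rw [swap_mul_swap, one_mul, mul_one]

/-- Conjugation by `(0 1; 1 0)` as an automorphism of `SL₂`; over `ℝ` it represents the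
nontrivial outer automorphism class. -/
def swapConj : MulAut SL(2, R) :=
  swapConjHom.toMulEquiv swapConjHom swapConjHom_comp_self swapConjHom_comp_self

theorem coe_swapConj (A : SL(2, R)) :
    (swapConj A).1 = !![0, 1; 1, 0] * A.1 * !![0, 1; 1, 0] := rfl

theorem swapConj_swapConj (A : SL(2, R)) : swapConj (swapConj A) = A :=
  swapConj.left_inv A

theorem swapConj_mul_self : (swapConj * swapConj : MulAut SL(2, R)) = 1 :=
  MulEquiv.ext swapConj_swapConj

theorem swapConj_upper (t : R) : swapConj (upper t) = lower t :=
  Subtype.ext <| by simp [coe_swapConj, coe_upper, coe_lower]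

theorem swapConj_lower (t : R) : swapConj (lower t) = upper t := by
  rw [← swapConj_upper, swapConj_swapConj]

theorem swapConj_notMem_range_conj (h : ¬IsSquare (-1 : R)) :
    swapConj ∉ (MulAut.conj : SL(2, R) →* MulAut SL(2, R)).range := by
  rintro ⟨g, hg⟩
  have hconj : IsConj (upper 1) (lower (1 : R)) :=
    isConj_iff.2 ⟨g, by rw [← MulAut.conj_apply, hg, swapConj_upper]⟩
  exact h (isSquare_of_isConj_upper_one (hconj.trans (isConj_lower_upper_neg 1)))

theorem isConj_map_swapConj_upper {ψ : MulAut SL(2, R)} {s t : R}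
    (h : IsConj (ψ (upper s)) (upper t)) : IsConj (ψ (swapConj (upper s))) (upper (-t)) := by
  have hlower : IsConj (swapConj (upper s)) (upper s)⁻¹ := by
    rw [swapConj_upper, upper_inv]
    exact isConj_lower_upper_neg s
  have hψ := ψ.toMonoidHom.map_isConj hlower
  simp only [MulEquiv.toMonoidHom_eq_coe, MonoidHom.coe_coe, map_inv] at hψ
  obtain ⟨g, hg⟩ := isConj_iff.1 h
  have hinv : IsConj (ψ (upper s))⁻¹ (upper t)⁻¹ := isConj_iff.2 ⟨g, by rw [← conj_inv, hg]⟩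
  rw [← upper_inv]
  exact hψ.trans hinv

end Swap

section Field

variable {K : Type*} [Field K]

theorem eq_one_of_map_upper_of_map_lower {ψ : MulAut SL(2, K)}
    (hupper : ∀ t, ψ (upper t) = upper t) (hlower : ∀ t, ψ (lower t) = lower t) : ψ = 1 := by
  ext1 A
  refine SL2.transvection_induction (fun A => ψ A = A) (fun i j hij t => ?_)
    (fun A B hA hB => by rw [map_mul, hA, hB]) A
  fin_cases i <;> fin_cases j
  · exact absurd rfl hij
  · exact hupper t
  · exact hlower t
  · exact absurd rfl hij

variable [NeZero (2 : K)] [NeZero (3 : K)] (h2 : IsSquare (2 : K)) (ψ : MulAut SL(2, K))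
include h2

theorem trace_map_upper (t : K) : (ψ (upper t)).1.trace = 2 := by
  obtain ⟨a, ha⟩ := h2
  have ha0 : a ≠ 0 := fun h => NeZero.ne (2 : K) (by rw [ha, h, mul_zero])
  refine trace_map_eq_two_of_isConj_sq ψ
    (by simp [coe_upper, trace_fin_two, one_add_one_eq_two]) ?_
  rw [sq (upper t), ← upper_add, ← two_mul, ha, ← sq]
  exact isConj_upper_sq_mul ha0 t

theorem trace_map_lower (t : K) : (ψ (lower t)).1.trace = 2 := by
  rw [← swapConj_upper, ← MulAut.mul_apply]
  exact trace_map_upper h2 (ψ * swapConj) t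

theorem exists_isConj_map_upper_one : ∃ t ≠ 0, IsConj (ψ (upper 1)) (upper t) := by
  obtain ⟨t, ht⟩ := exists_isConj_upper_of_trace_eq_two (trace_map_upper h2 ψ 1)
  refine ⟨t, ?_, ht⟩
  rintro rfl
  rw [upper_zero, isConj_one_left, map_eq_one_iff ψ ψ.injective, ← upper_zero] at ht
  exact one_ne_zero (upper_injective ht)

variable {ψ}

theorem exists_addMonoidHom_map_upper (hψ : ψ (upper 1) = upper 1) :
    ∃ f : K →+ K, ∀ t, ψ (upper t) = upper (f t) := by
  have hf (t : K) : ψ (upper t) = upper (ψ (upper t) 0 1) := by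
    refine eq_upper_of_commute_upper_one (trace_map_upper h2 ψ t) ?_
    have hcomm := (commute_upper t 1).map ψ
    rwa [hψ] at hcomm
  have hadd (s t : K) : ψ (upper (s + t)) 0 1 = ψ (upper s) 0 1 + ψ (upper t) 0 1 :=
    upper_injective (by rw [← hf, upper_add, upper_add, map_mul, ← hf, ← hf])
  exact ⟨.mk' (fun t => ψ (upper t) 0 1) hadd, hf⟩

theorem exists_map_lower_one_eq_conj (hψ : ψ (upper 1) = upper 1) :
    ∃ a : K, ψ (lower 1) = MulAut.conj (upper a) (lower 1) := by
  have htrace : (upper 1 * ψ (lower (-1))).1.trace = 1 := by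
    rw [← hψ, ← map_mul]
    refine trace_map_eq_one ψ ?_
    rw [trace_upper_mul, coe_lower]
    norm_num [trace_fin_two]
  have h10 : ψ (lower (-1)) 1 0 = -1 := by
    rw [trace_upper_mul, trace_map_lower h2] at htrace
    linear_combination htrace
  obtain ⟨a, ha⟩ :=
    exists_eq_upper_mul_lower_mul_upper_inv (trace_map_lower h2 ψ (-1)) (by simp [h10])
  refine ⟨a, ?_⟩
  rw [h10, ← lower_inv, ← MulAut.conj_apply, map_inv, map_inv] at ha
  exact inv_injective ha

end Field

section Euclidean

theorem addMonoidHom_apply_eq_self_of_monotone {K : Type*} [Field K] [LinearOrder K]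
    [IsStrictOrderedRing K] [Archimedean K] {f : K →+ K} (hf : Monotone f)
    (h1 : f 1 = 1) (x : K) : f x = x := by
  have hrat (q : ℚ) : f q = q := by
    simpa [h1, Rat.smul_def] using map_rat_smul f q (1 : K)
  exact le_antisymm (le_of_forall_lt_rat_imp_le fun q hq => hrat q ▸ hf hq.le)
    (le_of_forall_rat_lt_imp_le fun q hq => hrat q ▸ hf hq.le)

variable {K : Type*} [Field K] [LinearOrder K] [IsStrictOrderedRing K]
  (hK : ∀ x : K, 0 ≤ x → IsSquare x) {ψ : MulAut SL(2, K)}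
include hK

theorem isConj_map_upper_one_or (ψ : MulAut SL(2, K)) :
    IsConj (ψ (upper 1)) (upper 1) ∨ IsConj (ψ (upper 1)) (upper (-1)) := by
  obtain ⟨t, ht0, ht⟩ := exists_isConj_map_upper_one (hK 2 zero_le_two) ψ
  obtain ⟨a, ha⟩ := hK |t| (abs_nonneg t)
  have ha0 : a ≠ 0 := by rintro rfl; simp [ht0] at ha
  rw [← sq] at ha
  rcases abs_choice t with h | h
  · left
    have hconj := isConj_upper_sq_mul ha0 1
    rw [← ha, h, mul_one] at hconj
    exact ht.trans hconj.symm
  · right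
    have hconj := isConj_upper_sq_mul ha0 (-1)
    rw [← ha, h, mul_neg_one, neg_neg] at hconj
    exact ht.trans hconj.symm

variable [Archimedean K]

theorem map_upper_eq_of_map_upper_one (hψ : ψ (upper 1) = upper 1) (t : K) :
    ψ (upper t) = upper t := by
  obtain ⟨f, hf⟩ := exists_addMonoidHom_map_upper (hK 2 zero_le_two) hψ
  have hmono : Monotone f := by
    refine (monotone_iff_map_nonneg f).2 fun t ht => ?_
    obtain rfl | ht0 := eq_or_ne t 0
    · rw [map_zero]
    obtain ⟨a, rfl⟩ := hK t ht
    have hconj := ψ.toMonoidHom.map_isConj (isConj_upper_sq_mul (left_ne_zero_of_mul ht0) 1)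
    simp only [MulEquiv.toMonoidHom_eq_coe, MonoidHom.coe_coe, hψ, hf, mul_one, sq] at hconj
    exact (isSquare_of_isConj_upper_one hconj).nonneg
  rw [hf, addMonoidHom_apply_eq_self_of_monotone hmono (upper_injective (by rw [← hf, hψ]))]

theorem map_lower_eq_of_map_lower_one (hψ : ψ (lower 1) = lower 1) (t : K) :
    ψ (lower t) = lower t := by
  have h := map_upper_eq_of_map_upper_one hK (ψ := swapConj * ψ * swapConj)
    (by simp only [MulAut.mul_apply, swapConj_upper, hψ, swapConj_lower]) t
  rw [MulAut.mul_apply, MulAut.mul_apply, swapConj_upper, ← swapConj_lower] at h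
  exact swapConj.injective h

theorem mem_range_conj_of_map_upper_one (hψ : ψ (upper 1) = upper 1) :
    ψ ∈ (MulAut.conj : SL(2, K) →* MulAut SL(2, K)).range := by
  obtain ⟨a, ha⟩ := exists_map_lower_one_eq_conj (hK 2 zero_le_two) hψ
  refine ⟨upper a, inv_mul_eq_one.1 (eq_one_of_map_upper_of_map_lower
    (map_upper_eq_of_map_upper_one hK ?_) (map_lower_eq_of_map_lower_one hK ?_))⟩
  · rw [MulAut.mul_apply, hψ, MulAut.inv_apply, MulEquiv.symm_apply_eq, MulAut.conj_apply,
      eq_mul_inv_iff_mul_eq, (commute_upper 1 a).eq]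
  · rw [MulAut.mul_apply, ha, MulAut.inv_apply_self]

theorem mem_range_conj_of_isConj (hψ : IsConj (ψ (upper 1)) (upper 1)) :
    ψ ∈ (MulAut.conj : SL(2, K) →* MulAut SL(2, K)).range := by
  obtain ⟨g, hg⟩ := isConj_iff.1 hψ
  exact (Subgroup.mul_mem_cancel_left _ (MonoidHom.mem_range.2 ⟨g, rfl⟩)).1
    (mem_range_conj_of_map_upper_one hK (ψ := MulAut.conj g * ψ) hg)

end Euclidean

end Automorphism

end SL2

theorem out_sl2R_eq_Z2_general {K : Type*} [Field K] [LinearOrder K] [IsStrictOrderedRing K]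
    [Archimedean K] (hK : ∀ x : K, 0 ≤ x → IsSquare x) :
    ∃ φ : MulAut SL(2, K),
      (∀ A : SL(2, K), (φ A).1 = !![0, 1; 1, 0] * A.1 * !![0, 1; 1, 0]) ∧
      φ ∉ (MulAut.conj : SL(2, K) →* MulAut SL(2, K)).range ∧
      φ * φ = 1 ∧
      (∀ ψ : MulAut SL(2, K), ψ ∈ (MulAut.conj : SL(2, K) →* MulAut SL(2, K)).range ∨
        ψ * φ ∈ (MulAut.conj : SL(2, K) →* MulAut SL(2, K)).range) := by
  have hneg : ¬IsSquare (-1 : K) := fun h => neg_one_lt_zero.not_ge h.nonneg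
  refine ⟨SL2.swapConj, SL2.coe_swapConj, SL2.swapConj_notMem_range_conj hneg,
    SL2.swapConj_mul_self, fun ψ => (SL2.isConj_map_upper_one_or hK ψ).imp
      (SL2.mem_range_conj_of_isConj hK) fun h => SL2.mem_range_conj_of_isConj hK ?_⟩
  simpa only [MulAut.mul_apply, neg_neg] using SL2.isConj_map_swapConj_upper h

/-- The outer automorphism group of `SL(2,ℝ)` is `ℤ/2`, generated by conjugation by
`s = ((0,1),(1,0))` (note `s⁻¹ = s`): there is an automorphism `φ` of `SL(2,ℝ)` acting as
conjugation by `s`; `φ` is not inner; `φ² = 1`; and every automorphism of `SL(2,ℝ)` is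
either inner or inner after composing with `φ`. -/
theorem out_sl2R_eq_Z2 :
    ∃ φ : MulAut SL2R,
      (∀ A : SL2R, (↑(φ A) : Matrix (Fin 2) (Fin 2) ℝ) =
        !![0, 1; 1, 0] * (↑A : Matrix (Fin 2) (Fin 2) ℝ) * !![0, 1; 1, 0]) ∧
      φ ∉ (MulAut.conj : SL2R →* MulAut SL2R).range ∧
      φ * φ = 1 ∧
      (∀ ψ : MulAut SL2R, ψ ∈ (MulAut.conj : SL2R →* MulAut SL2R).range ∨
        ψ * φ ∈ (MulAut.conj : SL2R →* MulAut SL2R).range) :=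
  out_sl2R_eq_Z2_general fun x hx => ⟨√x, (Real.mul_self_sqrt hx).symm⟩
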